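/- arXiv:2411.00181 — 4 statements merged into one kernel-verified Lean document; each statement's English description precedes it below -/
import Mathlib

section
/- For every natural number k ≥ 1 and every real number p with 0 < p and p^k + p = 1, one has 1 − (1 + log k)/k < p. -/
/-!
If `p` were at most `1 - (1 + log x) / x`, then `p ≤ exp (-(1 - p))` would give
`p ^ x ≤ exp (-x (1 - p)) ≤ exp (-(1 + log x)) < 1 / x ≤ (1 + log x) / x ≤ 1 - p`,
so `p ^ x + p` would fall short of `1`.
-/

theorem rpow_le_exp_neg_mul_one_sub {p x : ℝ} (hp : 0 ≤ p) (hx : 0 ≤ x) :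
    p ^ x ≤ Real.exp (-(x * (1 - p))) := by
  have hp_le : p ≤ Real.exp (-(1 - p)) := by
    simpa only [sub_sub_cancel] using Real.one_sub_le_exp_neg (1 - p)
  calc p ^ x ≤ Real.exp (-(1 - p)) ^ x := Real.rpow_le_rpow hp hp_le hx
    _ = Real.exp (-(x * (1 - p))) := by rw [← Real.exp_mul, neg_mul, mul_comm]

theorem exp_neg_one_add_log_lt_inv {x : ℝ} (hx : 0 < x) :
    Real.exp (-(1 + Real.log x)) < x⁻¹ := by
  calc Real.exp (-(1 + Real.log x)) < Real.exp (-Real.log x) :=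
        Real.exp_lt_exp.mpr (by linarith)
    _ = x⁻¹ := by rw [Real.exp_neg, Real.exp_log hx]

theorem root_lower_bound_general {p x : ℝ} (hx : 1 ≤ x) (hp : 0 ≤ p)
    (hsum : 1 ≤ p ^ x + p) :
    1 - (1 + Real.log x) / x < p := by
  have hx_pos : 0 < x := one_pos.trans_le hx
  by_contra! hp_le
  have hdiv_le : (1 + Real.log x) / x ≤ 1 - p := le_sub_comm.mp hp_le
  have hpow_lt : p ^ x < 1 - p := by
    calc p ^ x ≤ Real.exp (-(x * (1 - p))) := rpow_le_exp_neg_mul_one_sub hp hx_pos.le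
      _ ≤ Real.exp (-(1 + Real.log x)) :=
        Real.exp_le_exp.mpr (neg_le_neg ((div_le_iff₀' hx_pos).mp hdiv_le))
      _ < x⁻¹ := exp_neg_one_add_log_lt_inv hx_pos
      _ = 1 / x := inv_eq_one_div x
      _ ≤ (1 + Real.log x) / x := by
        gcongr
        exact le_add_of_nonneg_right (Real.log_nonneg hx)
      _ ≤ 1 - p := hdiv_le
  linarith

theorem root_lower_bound (k : ℕ) (hk : 1 ≤ k) (p : ℝ) (hp : 0 < p)
    (hroot : p ^ k + p = 1) :
    1 - (1 + Real.log k) / k < p :=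
  root_lower_bound_general (Nat.one_le_cast.mpr hk) hp.le
    (by rw [Real.rpow_natCast, hroot])
end

section
/- For every natural number k ≥ 2 and every real number p with 0 < p and p^k + p = 1, one has p < 1 − (log k − log (log k))/(2k). -/
/-!
Put `x = (log t - log (log t)) / (2 * t)`, so that `exp (-(2 * x)) ^ t = log t / t` exceeds `x`
as soon as `t * log t > 1`. Since `exp (-(2 * x)) ≤ 1 - x` on `[0, 1/2]`, a number `p ≥ 1 - x` would
satisfy `p ^ t + p ≥ log t / t + (1 - x) > 1`.
-/

open Real

theorem exp_neg_two_mul_le_one_sub {x : ℝ} (hx₀ : 0 ≤ x) (hx : x ≤ 1 / 2) :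
    exp (-(2 * x)) ≤ 1 - x := by
  have one_sub_pos : 0 < 1 - x := by linarith
  rw [← le_log_iff_exp_le one_sub_pos]
  calc -(2 * x) ≤ 1 - (1 - x)⁻¹ := by
        rw [le_sub_comm, inv_le_iff_one_le_mul₀ one_sub_pos]
        nlinarith
    _ ≤ log (1 - x) := one_sub_inv_le_log_of_pos one_sub_pos

theorem lt_one_sub_of_rpow_add_le_one {t p x : ℝ} (ht : 0 ≤ t) (hx₀ : 0 ≤ x) (hx : x ≤ 1 / 2)
    (hexp : x < exp (-(2 * x) * t)) (hp : p ^ t + p ≤ 1) : p < 1 - x := by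
  by_contra! one_sub_le
  have exp_le_rpow : exp (-(2 * x) * t) ≤ p ^ t := by
    rw [exp_mul]
    exact rpow_le_rpow (exp_pos _).le
      ((exp_neg_two_mul_le_one_sub hx₀ hx).trans one_sub_le) ht
  linarith

theorem log_le_half_self {t : ℝ} (ht : 0 < t) : log t ≤ t / 2 := by
  have log_half_le : log (t / 2) ≤ t / 2 - 1 := log_le_sub_one_of_pos (by positivity)
  have log_two_le : log 2 ≤ 2 - 1 := log_le_sub_one_of_pos two_pos
  rw [log_div ht.ne' two_ne_zero] at log_half_le
  linarith

theorem exp_log_log_sub_log {t : ℝ} (ht : 1 < t) : exp (log (log t) - log t) = log t / t := by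
  rw [exp_sub, exp_log (log_pos ht), exp_log (one_pos.trans ht)]

theorem log_sub_log_log_div_lt {t : ℝ} (ht : 0 < t) (hlog : 1 < t * log t) :
    (log t - log (log t)) / (2 * t) < log t / t := by
  have log_t_pos : 0 < log t := pos_of_mul_pos_right (one_pos.trans hlog) ht.le
  have log_add_pos : 0 < log t + log (log t) := by
    rw [← log_mul ht.ne' log_t_pos.ne']
    exact log_pos hlog
  rw [div_lt_div_iff₀ (by positivity) ht]
  nlinarith

theorem one_lt_mul_log_of_two_le {t : ℝ} (ht : 2 ≤ t) : 1 < t * log t := by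
  have half_lt_log : 1 / 2 < log t := by
    linarith [log_two_gt_d9, log_le_log two_pos ht]
  nlinarith

theorem root_upper_bound_general {t p : ℝ} (ht : 0 < t) (hlog : 1 < t * log t)
    (hp : p ^ t + p ≤ 1) : p < 1 - (log t - log (log t)) / (2 * t) := by
  have log_t_pos : 0 < log t := pos_of_mul_pos_right (one_pos.trans hlog) ht.le
  have one_lt_t : 1 < t := (log_pos_iff ht.le).mp log_t_pos
  have lt_log_div := log_sub_log_log_div_lt ht hlog
  refine lt_one_sub_of_rpow_add_le_one ht.le ?nonneg ?le_half ?lt_exp hp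
  case nonneg =>
    have := log_le_sub_one_of_pos log_t_pos
    exact div_nonneg (by linarith) (by positivity)
  case le_half =>
    refine lt_log_div.le.trans ?_
    rw [div_le_iff₀ ht]
    linarith [log_le_half_self ht]
  case lt_exp =>
    have exponent_eq :
        -(2 * ((log t - log (log t)) / (2 * t))) * t = log (log t) - log t := by
      field_simp
      ring
    rwa [exponent_eq, exp_log_log_sub_log one_lt_t]

theorem root_upper_bound (k : ℕ) (hk : 2 ≤ k) (p : ℝ) (hp : 0 < p)
    (hroot : p ^ k + p = 1) :
    p < 1 - (Real.log k - Real.log (Real.log k)) / (2 * k) :=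
  root_upper_bound_general (by positivity) (one_lt_mul_log_of_two_le (mod_cast hk))
    (by rw [rpow_natCast, hroot])
end

section
/- Let p : ℕ → ℝ be any function such that for every natural number k ≥ 1, p(k) > 0 and p(k)^k + p(k) = 1. Then the function k ↦ 1 − p(k) is Θ(log k / k) as k → ∞; that is, there exist constants c₁, c₂ > 0 and K such that for all k ≥ K, c₁ · (log k)/k ≤ 1 − p(k) ≤ c₂ · (log k)/k. -/
/-!
Since `x ↦ x ^ r + x` is strictly increasing on `[0, ∞)`, its value at a trial point `1 - t` shows
on which side of `1 - t` the root of `x ^ r + x = 1` lies: `t` is an upper bound for one minus the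
root if `(1 - t) ^ r ≤ t`, and a lower bound if `t ≤ (1 - t) ^ r`. For `t = log r / r` the power is
at most `exp (-log r) = 1 / r ≤ t`, and for `t = log r / (4 r)` it is at least
`exp (-log r / 2) = 1 / √r ≥ t`.
-/

open Real

theorem le_of_rpow_add_self_le_rpow_add_self {r x y : ℝ} (hr : 0 ≤ r) (hx : 0 ≤ x)
    (h : y ^ r + y ≤ x ^ r + x) : y ≤ x := by
  by_contra! hxy
  linarith [rpow_le_rpow hx hxy.le hr]

theorem one_sub_rpow_le_exp_neg_mul {r t : ℝ} (hr : 0 ≤ r) (ht : t ≤ 1) :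
    (1 - t) ^ r ≤ exp (-(t * r)) :=
  calc (1 - t) ^ r ≤ exp (-t) ^ r := rpow_le_rpow (sub_nonneg.2 ht) (one_sub_le_exp_neg t) hr
    _ = exp (-(t * r)) := by rw [← exp_mul, neg_mul]

theorem exp_neg_two_mul_le_one_sub_s3 {t : ℝ} (ht₀ : 0 ≤ t) (ht : t ≤ 1 / 2) :
    exp (-(2 * t)) ≤ 1 - t := by
  rw [exp_neg, inv_le_iff_one_le_mul₀ (exp_pos _)]
  calc 1 ≤ (1 - t) * (2 * t + 1) := by nlinarith
    _ ≤ (1 - t) * exp (2 * t) := by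
      gcongr
      · linarith
      · exact add_one_le_exp _

theorem exp_neg_two_mul_mul_le_one_sub_rpow {r t : ℝ} (hr : 0 ≤ r) (ht₀ : 0 ≤ t)
    (ht : t ≤ 1 / 2) : exp (-(2 * t * r)) ≤ (1 - t) ^ r :=
  calc exp (-(2 * t * r)) = exp (-(2 * t)) ^ r := by rw [← exp_mul, neg_mul]
    _ ≤ (1 - t) ^ r := rpow_le_rpow (exp_pos _).le (exp_neg_two_mul_le_one_sub_s3 ht₀ ht) hr

theorem log_div_two_mul_le_exp_neg_half_log {r : ℝ} (hr : 0 < r) :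
    log r / (2 * r) ≤ exp (-(log r / 2)) :=
  calc log r / (2 * r) = log r / 2 / r := by ring
    _ ≤ exp (log r / 2) / r := by
      gcongr
      linarith [add_one_le_exp (log r / 2)]
    _ = exp (log r / 2) / exp (log r) := by rw [exp_log hr]
    _ = exp (-(log r / 2)) := by rw [← exp_sub]; congr 1; ring

theorem one_sub_root_le_log_div {r x : ℝ} (hr : exp 1 ≤ r) (hx : 0 < x)
    (hroot : x ^ r + x = 1) : 1 - x ≤ log r / r := by
  have r_pos : 0 < r := (exp_pos 1).trans_le hr
  have one_le_log : 1 ≤ log r := (le_log_iff_exp_le r_pos).2 hr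
  have trial_le_one : log r / r ≤ 1 := div_le_one_of_le₀ (log_le_self r_pos.le) r_pos.le
  have rpow_le : (1 - log r / r) ^ r ≤ log r / r :=
    calc (1 - log r / r) ^ r ≤ exp (-(log r / r * r)) :=
          one_sub_rpow_le_exp_neg_mul r_pos.le trial_le_one
      _ = 1 / r := by rw [div_mul_cancel₀ _ r_pos.ne', exp_neg, exp_log r_pos, one_div]
      _ ≤ log r / r := by gcongr
  have trial_le_root : 1 - log r / r ≤ x :=
    le_of_rpow_add_self_le_rpow_add_self r_pos.le hx.le (by linarith)
  linarith

theorem log_div_four_mul_le_one_sub_root {r x : ℝ} (hr : 1 ≤ r) (hroot : x ^ r + x = 1) :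
    log r / (4 * r) ≤ 1 - x := by
  have r_pos : 0 < r := one_pos.trans_le hr
  have trial_nonneg : 0 ≤ log r / (4 * r) := div_nonneg (log_nonneg hr) (by positivity)
  have trial_le_half : log r / (4 * r) ≤ 1 / 2 := by
    rw [div_le_iff₀ (by positivity)]
    linarith [log_le_self r_pos.le]
  have le_rpow : log r / (4 * r) ≤ (1 - log r / (4 * r)) ^ r :=
    calc log r / (4 * r) ≤ log r / (2 * r) := by
          gcongr
          · exact log_nonneg hr
          · norm_num
      _ ≤ exp (-(log r / 2)) := log_div_two_mul_le_exp_neg_half_log r_pos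
      _ = exp (-(2 * (log r / (4 * r)) * r)) := by congr 2; field_simp; norm_num
      _ ≤ (1 - log r / (4 * r)) ^ r :=
          exp_neg_two_mul_mul_le_one_sub_rpow r_pos.le trial_nonneg trial_le_half
  have root_le_trial : x ≤ 1 - log r / (4 * r) :=
    le_of_rpow_add_self_le_rpow_add_self r_pos.le (by linarith) (by linarith)
  linarith

theorem one_sub_root_is_theta_log_div_general :
    ∃ c₁ c₂ : ℝ, 0 < c₁ ∧ 0 < c₂ ∧ ∃ R : ℝ, ∀ r x : ℝ, R ≤ r → 0 < x → x ^ r + x = 1 →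
      c₁ * log r / r ≤ 1 - x ∧ 1 - x ≤ c₂ * log r / r := by
  refine ⟨1 / 4, 1, by norm_num, one_pos, exp 1, fun r x hr hx hroot => ⟨?_, ?_⟩⟩
  · have one_le : 1 ≤ r := (one_le_exp zero_le_one).trans hr
    calc 1 / 4 * log r / r = log r / (4 * r) := by ring
      _ ≤ 1 - x := log_div_four_mul_le_one_sub_root one_le hroot
  · simpa only [one_mul] using one_sub_root_le_log_div hr hx hroot

theorem one_sub_root_is_theta_log_div (p : ℕ → ℝ)
    (hp : ∀ k : ℕ, 1 ≤ k → 0 < p k ∧ (p k) ^ k + p k = 1) :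
    ∃ c₁ c₂ : ℝ, 0 < c₁ ∧ 0 < c₂ ∧ ∃ K : ℕ, ∀ k : ℕ, K ≤ k →
      c₁ * (Real.log k) / k ≤ 1 - p k ∧ 1 - p k ≤ c₂ * (Real.log k) / k := by
  obtain ⟨c₁, c₂, hc₁, hc₂, R, hR⟩ := one_sub_root_is_theta_log_div_general
  refine ⟨c₁, c₂, hc₁, hc₂, max 1 ⌈R⌉₊, fun k hk => ?_⟩
  obtain ⟨hpos, hroot⟩ := hp k (le_of_max_le_left hk)
  exact hR k (p k) (Nat.ceil_le.1 (le_of_max_le_right hk)) hpos (by rwa [rpow_natCast])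
end

section
/- Let S be a finite set, let k ≥ 1 be a natural number, and let q : S → ℝ satisfy 0 ≤ q(e) ≤ 1 for every e ∈ S. Then (∏_{e ∈ S} q(e))^(1/k) ≤ ∏_{e ∈ S} (1 − (1 − q(e))/k), where the left-hand exponentiation is real power with exponent 1/k. -/
theorem rpow_le_one_sub_mul_one_sub {x p : ℝ} (hx : 0 ≤ x) (hp0 : 0 ≤ p) (hp1 : p ≤ 1) :
    x ^ p ≤ 1 - p * (1 - x) :=
  calc
    x ^ p = (1 + (x - 1)) ^ p := by rw [add_sub_cancel]
    _ ≤ 1 + p * (x - 1) := rpow_one_add_le_one_add_mul_self (by linarith) hp0 hp1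
    _ = 1 - p * (1 - x) := by ring

theorem prod_rpow_inv_nat_le_prod_bernoulli_general {ι : Type*} (S : Finset ι) {p : ℝ}
    (hp0 : 0 ≤ p) (hp1 : p ≤ 1) (q : ι → ℝ) (hq : ∀ e ∈ S, 0 ≤ q e) :
    (∏ e ∈ S, q e) ^ p ≤ ∏ e ∈ S, (1 - p * (1 - q e)) :=
  calc
    (∏ e ∈ S, q e) ^ p = ∏ e ∈ S, q e ^ p := (Real.finsetProd_rpow S q hq p).symm
    _ ≤ ∏ e ∈ S, (1 - p * (1 - q e)) :=
      Finset.prod_le_prod (fun e he ↦ Real.rpow_nonneg (hq e he) p)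
        fun e he ↦ rpow_le_one_sub_mul_one_sub (hq e he) hp0 hp1

theorem prod_rpow_inv_nat_le_prod_bernoulli {ι : Type*} (S : Finset ι)
    (k : ℕ) (hk : 1 ≤ k) (q : ι → ℝ)
    (hq0 : ∀ e ∈ S, 0 ≤ q e) (hq1 : ∀ e ∈ S, q e ≤ 1) :
    (∏ e ∈ S, q e) ^ ((1 : ℝ) / k) ≤ ∏ e ∈ S, (1 - (1 - q e) / k) := by
  have inv_le_one : (1 : ℝ) / k ≤ 1 := div_le_one_of_le₀ (mod_cast hk) k.cast_nonneg
  simpa only [one_div_mul_eq_div] using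
    prod_rpow_inv_nat_le_prod_bernoulli_general S (by positivity) inv_le_one q hq0
end
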